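/- arXiv:1406.4381 — 5 statements merged into one kernel-verified Lean document; each statement's English description precedes it below -/
import Mathlib

section
/- Let η > 0. Let ρ, j : ℝ × ℝ → ℝ be continuously differentiable, 1-periodic in their second argument, and satisfy the continuity equation ∂ρ/∂t + ∂j/∂x = 0 at every point. Let A, B, 𝓔 : ℝ × ℝ → ℝ be continuously differentiable, 1-periodic in their second argument, and satisfy ∂A/∂t = −𝓔, B = ∂A/∂x, ∂B/∂t = −∂𝓔/∂x and ∂𝓔/∂t = η⁻²·A·ρ − ∂B/∂x at every point. Then the transverse energy WT(t) := (1/2)·∫₀¹ A(t,x)²·ρ(t,x) dx + (η²/2)·∫₀¹ [𝓔(t,x)² + B(t,x)²] dx satisfies d/dt WT(t) = ∫₀¹ A(t,x)·B(t,x)·j(t,x) dx for all t. -/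
/-!
The energy density `w = A²ρ/2 + η²(E² + B²)/2` satisfies the local balance law
`∂ₜ w + ∂ₓ (A²j/2 + η² E B) = A B j`: the source `η⁻² A ρ` in the equation for `E` cancels the work
term `-A E ρ` coming from `∂ₜ A = -E`, and the continuity equation turns `A² ∂ₜρ / 2` into
`-A² ∂ₓj / 2`. Integrating over one period removes the flux, by periodicity, and leaves
`∫ A B j`. Differentiation under the integral sign (`hasDerivAt_integral_of_contDiff_prod`) is
justified since `w` is `C¹` and the domain of integration is compact.
-/


open MeasureTheory

theorem hasDerivAt_fst_of_contDiff {F : ℝ × ℝ → ℝ} (hF : ContDiff ℝ 1 F) (t x : ℝ) :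
    HasDerivAt (fun s => F (s, x)) (fderiv ℝ F (t, x) (1, 0)) t := by
  have h := (hF.differentiable one_ne_zero (t, x)).hasFDerivAt
  exact h.comp_hasDerivAt t ((hasDerivAt_id t).prodMk (hasDerivAt_const t x))

theorem differentiableAt_snd_of_contDiff {F : ℝ × ℝ → ℝ} (hF : ContDiff ℝ 1 F) (t x : ℝ) :
    DifferentiableAt ℝ (fun y => F (t, y)) x := by
  have h : ContDiff ℝ 1 (fun y => F (t, y)) := by fun_prop
  exact h.differentiable one_ne_zero x

/-- Differentiation under the integral sign for a `C¹` integrand; the dominating function is the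
constant bound of `∂ₜ F` on the compact set `[t - 1, t + 1] × [a, b]`. -/
theorem hasDerivAt_integral_of_contDiff_prod {F : ℝ × ℝ → ℝ} (hF : ContDiff ℝ 1 F)
    (a b t : ℝ) :
    HasDerivAt (fun s => ∫ x in a..b, F (s, x))
      (∫ x in a..b, deriv (fun s => F (s, x)) t) t := by
  have hcF : Continuous F := hF.continuous
  have hcF' : Continuous (fun p : ℝ × ℝ => fderiv ℝ F p (1, 0)) :=
    (hF.continuous_fderiv one_ne_zero).clm_apply continuous_const
  obtain ⟨C, hC⟩ := ((isCompact_closedBall t 1).prod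
    (isCompact_uIcc (a := a) (b := b))).exists_bound_of_continuousOn hcF'.continuousOn
  simp_rw [(hasDerivAt_fst_of_contDiff hF t _).deriv]
  refine (intervalIntegral.hasDerivAt_integral_of_dominated_loc_of_deriv_le
    (F := fun s x => F (s, x)) (F' := fun s x => fderiv ℝ F (s, x) (1, 0))
    (bound := fun _ => C)
    (Metric.closedBall_mem_nhds t one_pos) ?_ ?_ ?_ ?_ ?_ ?_).2
  · exact Filter.Eventually.of_forall fun s =>
      (hcF.comp (Continuous.prodMk_right s)).aestronglyMeasurable
  · exact (hcF.comp (Continuous.prodMk_right t)).intervalIntegrable _ _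
  · exact (hcF'.comp (Continuous.prodMk_right t)).aestronglyMeasurable
  · exact Filter.Eventually.of_forall fun x hx s hs =>
      hC (s, x) ⟨hs, Set.uIoc_subset_uIcc hx⟩
  · exact intervalIntegrable_const
  · exact Filter.Eventually.of_forall fun x _ s _ => hasDerivAt_fst_of_contDiff hF s x

/-- The integral over one period of the derivative of a `C¹` periodic function vanishes. -/
theorem integral_deriv_eq_zero_of_periodic {g : ℝ → ℝ} (hg : ContDiff ℝ 1 g)
    (hper : ∀ x, g (x + 1) = g x) : ∫ x in (0:ℝ)..1, deriv g x = 0 := by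
  rw [intervalIntegral.integral_deriv_eq_sub
    (fun x _ => hg.differentiable one_ne_zero x)
    ((hg.continuous_deriv le_rfl).intervalIntegrable _ _)]
  have h := hper 0
  rw [zero_add] at h
  rw [h, sub_self]

/-- Evolution of the transverse energy: under the Maxwell equations and the
continuity equation, `d/dt WT(t) = ∫₀¹ A·B·j dx`. -/
theorem transverse_energy_evolution
    (η : ℝ) (hη : 0 < η)
    (ρ j : ℝ × ℝ → ℝ) (hρ : ContDiff ℝ 1 ρ) (hj : ContDiff ℝ 1 j)
    (hρper : ∀ t x : ℝ, ρ (t, x + 1) = ρ (t, x))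
    (hjper : ∀ t x : ℝ, j (t, x + 1) = j (t, x))
    (hcont : ∀ t x : ℝ,
      deriv (fun s => ρ (s, x)) t + deriv (fun y => j (t, y)) x = 0)
    (A B E : ℝ × ℝ → ℝ)
    (hA : ContDiff ℝ 1 A) (hB : ContDiff ℝ 1 B) (hE : ContDiff ℝ 1 E)
    (hAper : ∀ t x : ℝ, A (t, x + 1) = A (t, x))
    (hBper : ∀ t x : ℝ, B (t, x + 1) = B (t, x))
    (hEper : ∀ t x : ℝ, E (t, x + 1) = E (t, x))
    (hAt : ∀ t x : ℝ, deriv (fun s => A (s, x)) t = -E (t, x))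
    (hBdef : ∀ t x : ℝ, B (t, x) = deriv (fun y => A (t, y)) x)
    (hBt : ∀ t x : ℝ,
      deriv (fun s => B (s, x)) t = -deriv (fun y => E (t, y)) x)
    (hEt : ∀ t x : ℝ,
      deriv (fun s => E (s, x)) t =
        η⁻¹ ^ 2 * A (t, x) * ρ (t, x) - deriv (fun y => B (t, y)) x) :
    ∀ t : ℝ,
      HasDerivAt (fun s =>
          (1 / 2) * (∫ x in (0:ℝ)..1, A (s, x) ^ 2 * ρ (s, x))
            + (η ^ 2 / 2) * ∫ x in (0:ℝ)..1, (E (s, x) ^ 2 + B (s, x) ^ 2))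
        (∫ x in (0:ℝ)..1, A (t, x) * B (t, x) * j (t, x)) t := by
  intro t
  have hw : ContDiff ℝ 1 (fun p : ℝ × ℝ =>
      (1 / 2) * (A p ^ 2 * ρ p) + (η ^ 2 / 2) * (E p ^ 2 + B p ^ 2)) := by fun_prop
  have hG : ContDiff ℝ 1 (fun x : ℝ =>
      (1 / 2) * (A (t, x) ^ 2 * j (t, x)) + η ^ 2 * (E (t, x) * B (t, x))) := by fun_prop
  have hGint := integral_deriv_eq_zero_of_periodic hG
    (fun x => by simp only [hAper, hjper, hEper, hBper])
  have hcA := hA.continuous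
  have hcB := hB.continuous
  have hcE := hE.continuous
  have hcρ := hρ.continuous
  have hcj := hj.continuous
  -- The local balance law `∂ₜ w = A B j - ∂ₓ (A² j / 2 + η² E B)`.
  have hbal : ∀ x : ℝ,
      deriv (fun s => (1 / 2) * (A (s, x) ^ 2 * ρ (s, x))
        + (η ^ 2 / 2) * (E (s, x) ^ 2 + B (s, x) ^ 2)) t =
      A (t, x) * B (t, x) * j (t, x) - deriv (fun x : ℝ =>
        (1 / 2) * (A (t, x) ^ 2 * j (t, x)) + η ^ 2 * (E (t, x) * B (t, x))) x := by
    intro x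
    have dt {F : ℝ × ℝ → ℝ} (hF : ContDiff ℝ 1 F) :
        HasDerivAt (fun s => F (s, x)) (deriv (fun s => F (s, x)) t) t :=
      (hasDerivAt_fst_of_contDiff hF t x).differentiableAt.hasDerivAt
    have dx {F : ℝ × ℝ → ℝ} (hF : ContDiff ℝ 1 F) :
        HasDerivAt (fun y => F (t, y)) (deriv (fun y => F (t, y)) x) x :=
      (differentiableAt_snd_of_contDiff hF t x).hasDerivAt
    have h1 := ((((dt hA).fun_pow 2).fun_mul (dt hρ)).const_mul (1 / 2 : ℝ)).fun_add
      ((((dt hE).fun_pow 2).fun_add ((dt hB).fun_pow 2)).const_mul (η ^ 2 / 2))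
    have h2 := ((((dx hA).fun_pow 2).fun_mul (dx hj)).const_mul (1 / 2 : ℝ)).fun_add
      (((dx hE).fun_mul (dx hB)).const_mul (η ^ 2))
    have hc : deriv (fun s => ρ (s, x)) t = -deriv (fun y => j (t, y)) x := by
      linarith [hcont t x]
    rw [h1.deriv, h2.deriv, hAt, hBt, hEt, hc, ← hBdef]
    have hη0 : η ≠ 0 := hη.ne'
    field_simp
    ring
  have hmain := hasDerivAt_integral_of_contDiff_prod hw 0 1 t
  simp only [hbal] at hmain
  rw [intervalIntegral.integral_sub
    (Continuous.intervalIntegrable (by fun_prop) _ _)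
    ((hG.continuous_deriv le_rfl).intervalIntegrable _ _), hGint, sub_zero] at hmain
  refine hmain.congr_of_eventuallyEq (Filter.Eventually.of_forall fun s => ?_)
  dsimp only
  rw [← intervalIntegral.integral_const_mul, ← intervalIntegral.integral_const_mul,
    ← intervalIntegral.integral_add
    (Continuous.intervalIntegrable (by fun_prop) _ _)
    (Continuous.intervalIntegrable (by fun_prop) _ _)]
end

section
/- Let η > 0 and v(p) = p/√(1+p²). Let A, B, E : ℝ × ℝ → ℝ be continuous and 1-periodic in their second argument, with E continuously differentiable. Let f : ℝ × ℝ × ℝ → ℝ be continuously differentiable, 1-periodic in its second argument, with f(t,x,p) = 0 whenever |p| ≥ P for some P > 0, and define j(t,x) := ∫_ℝ v(p)·f(t,x,p) dp. Assume f satisfies the Vlasov equation ∂f/∂t + v(p)·∂f/∂x + F(t,x)·∂f/∂p = 0 with Lorentz force F = −(E + A·B), and assume the Ampère relation ∂E/∂t(t,x) = η⁻²·j(t,x) holds at every point. Then the longitudinal energy WL(t) := ∫₀¹ ∫_ℝ (√(1+p²) − 1)·f(t,x,p) dp dx + (η²/2)·∫₀¹ E(t,x)² dx satisfies d/dt WL(t)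 = −∫₀¹ A(t,x)·B(t,x)·j(t,x) dx for all t. -/
/-!
Since `f` vanishes for `|p| ≥ P`, every momentum integral is an integral over `[-P, P]`, and
differentiation under the integral sign (`hasDerivAt_integral_of_continuous`) applies to all the
integrals involved. With `g p = √(1+p²) - 1`, so that `g' = v`, the Vlasov equation gives
`∫ g ∂ₜf dp = -∂ₓ ∫ g v f dp + (E + A B) ∫ g ∂ₚf dp`. The flux term integrates to zero over a
period in `x`, and integration by parts turns the last integral into `-j`. So the kinetic energy
changes at the rate `-∫ (E + A B) j dx`, while by the Ampère relation the potential energy changes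
at the rate `∫ E j dx`; the sum of the two is the claim.
-/

open MeasureTheory

/-- Differentiation under the integral sign over a bounded interval, for a jointly continuous
integrand with jointly continuous partial derivative. -/
lemma hasDerivAt_integral_of_continuous (F F' : ℝ → ℝ → ℝ)
    (hd : ∀ s x, HasDerivAt (fun r => F r x) (F' s x) s)
    (hF : Continuous (Function.uncurry F)) (hF' : Continuous (Function.uncurry F'))
    (a b t : ℝ) :
    HasDerivAt (fun s => ∫ x in a..b, F s x) (∫ x in a..b, F' t x) t := by
  obtain ⟨C, hC⟩ := ((isCompact_closedBall t 1).prod (isCompact_uIcc (a := a) (b := b))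
    ).exists_bound_of_continuousOn hF'.continuousOn
  have hcF : ∀ s, Continuous (F s) := fun s => hF.comp (Continuous.prodMk_right s)
  have hcF' : ∀ s, Continuous (F' s) := fun s => hF'.comp (Continuous.prodMk_right s)
  refine (intervalIntegral.hasDerivAt_integral_of_dominated_loc_of_deriv_le
    (F := F) (F' := F') (bound := fun _ => C) (Metric.closedBall_mem_nhds t one_pos)
    (Filter.Eventually.of_forall fun s => (hcF s).aestronglyMeasurable)
    ((hcF t).intervalIntegrable _ _) (hcF' t).aestronglyMeasurable ?_
    intervalIntegrable_const ?_).2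
  · exact Filter.Eventually.of_forall fun x hx s hs =>
      hC (s, x) ⟨hs, Set.uIoc_subset_uIcc hx⟩
  · exact Filter.Eventually.of_forall fun x _ s _ => hd s x

lemma hasDerivAt_relativistic_energy (p : ℝ) :
    HasDerivAt (fun q : ℝ => Real.sqrt (1 + q ^ 2) - 1) (p / Real.sqrt (1 + p ^ 2)) p := by
  have h : HasDerivAt (fun q : ℝ => 1 + q ^ 2) (2 * p) p := by
    simpa using (hasDerivAt_pow 2 p).const_add 1
  refine ((h.sqrt (by positivity)).sub_const 1).congr_deriv ?_
  field_simp



/-- Evolution of the longitudinal energy: under the Vlasov equation with Lorentz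
force `F = −(E + A·B)` and the Ampère relation `∂E/∂t = η⁻²·j`,
`d/dt WL(t) = −∫₀¹ A·B·j dx`. -/
theorem longitudinal_energy_evolution
    (η : ℝ) (hη : 0 < η)
    (v : ℝ → ℝ) (hv : ∀ p : ℝ, v p = p / Real.sqrt (1 + p ^ 2))
    (A B E : ℝ × ℝ → ℝ) (hA : Continuous A) (hB : Continuous B)
    (hE : ContDiff ℝ 1 E)
    (hAper : ∀ t x : ℝ, A (t, x + 1) = A (t, x))
    (hBper : ∀ t x : ℝ, B (t, x + 1) = B (t, x))
    (hEper : ∀ t x : ℝ, E (t, x + 1) = E (t, x))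
    (f : ℝ × ℝ × ℝ → ℝ) (hf : ContDiff ℝ 1 f)
    (hfper : ∀ t x p : ℝ, f (t, x + 1, p) = f (t, x, p))
    (P : ℝ) (hP : 0 < P)
    (hsupp : ∀ t x p : ℝ, P ≤ |p| → f (t, x, p) = 0)
    (hPDE : ∀ t x p : ℝ,
      deriv (fun s => f (s, x, p)) t
        + v p * deriv (fun y => f (t, y, p)) x
        + (-(E (t, x) + A (t, x) * B (t, x))) * deriv (fun q => f (t, x, q)) p
        = 0)
    (hAmpere : ∀ t x : ℝ,
      deriv (fun s => E (s, x)) t =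
        η⁻¹ ^ 2 * ∫ p : ℝ, v p * f (t, x, p)) :
    ∀ t : ℝ,
      HasDerivAt (fun s =>
          (∫ x in (0:ℝ)..1, ∫ p : ℝ, (Real.sqrt (1 + p ^ 2) - 1) * f (s, x, p))
            + (η ^ 2 / 2) * ∫ x in (0:ℝ)..1, E (s, x) ^ 2)
        (-∫ x in (0:ℝ)..1, A (t, x) * B (t, x) * ∫ p : ℝ, v p * f (t, x, p))
        t := by
  intro t
  have hvc : Continuous v := by
    have : v = fun p => p / Real.sqrt (1 + p ^ 2) := funext hv
    rw [this]
    exact continuous_id.div (by fun_prop) fun p => by positivity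
  set g : ℝ → ℝ := fun p => Real.sqrt (1 + p ^ 2) - 1 with hg
  have hgc : Continuous g := by fun_prop
  have hgd : ∀ p, HasDerivAt g (v p) p := fun p => by
    rw [hv]; exact hasDerivAt_relativistic_energy p
  have hfc : Continuous f := hf.continuous
  have hfd : ∀ z, HasFDerivAt f (fderiv ℝ f z) z := fun z =>
    (hf.differentiable one_ne_zero z).hasFDerivAt
  have hf'c : Continuous (fderiv ℝ f) := hf.continuous_fderiv one_ne_zero
  have hft : ∀ s x p, HasDerivAt (fun r => f (r, x, p)) (fderiv ℝ f (s, x, p) (1, 0, 0)) s :=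
    fun s x p => (hfd (s, x, p)).comp_hasDerivAt s
      ((hasDerivAt_id s).prodMk ((hasDerivAt_const s x).prodMk (hasDerivAt_const s p)))
  have hfx : ∀ s x p, HasDerivAt (fun y => f (s, y, p)) (fderiv ℝ f (s, x, p) (0, 1, 0)) x :=
    fun s x p => (hfd (s, x, p)).comp_hasDerivAt x
      ((hasDerivAt_const x s).prodMk ((hasDerivAt_id x).prodMk (hasDerivAt_const x p)))
  have hfp : ∀ s x p, HasDerivAt (fun q => f (s, x, q)) (fderiv ℝ f (s, x, p) (0, 0, 1)) p :=
    fun s x p => (hfd (s, x, p)).comp_hasDerivAt p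
      ((hasDerivAt_const p s).prodMk ((hasDerivAt_const p x).prodMk (hasDerivAt_id p)))
  have hPDE' : ∀ s x p, fderiv ℝ f (s, x, p) (1, 0, 0)
      = -(v p * fderiv ℝ f (s, x, p) (0, 1, 0))
        + (E (s, x) + A (s, x) * B (s, x)) * fderiv ℝ f (s, x, p) (0, 0, 1) := by
    intro s x p
    have := hPDE s x p
    rw [(hft s x p).deriv, (hfx s x p).deriv, (hfp s x p).deriv] at this
    linarith
  have htrunc : ∀ (w : ℝ → ℝ) (s x : ℝ),
      ∫ p : ℝ, w p * f (s, x, p) = ∫ p in (-P)..P, w p * f (s, x, p) := by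
    intro w s x
    refine (intervalIntegral.integral_eq_integral_of_support_subset fun p hp => ?_).symm
    have : |p| < P := by
      by_contra! h
      exact hp (by simp [hsupp s x p h])
    exact ⟨(abs_lt.1 this).1, (abs_lt.1 this).2.le⟩
  have hjc : ∀ s, Continuous fun x => ∫ p in (-P)..P, v p * f (s, x, p) := fun s =>
    intervalIntegral.continuous_parametric_intervalIntegral_of_continuous' (by fun_prop) _ _
  have hEd : ∀ s x, HasDerivAt (fun r => E (r, x)) (fderiv ℝ E (s, x) (1, 0)) s := fun s x =>
    ((hE.differentiable one_ne_zero (s, x)).hasFDerivAt).comp_hasDerivAt s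
      ((hasDerivAt_id s).prodMk (hasDerivAt_const s x))
  have hE'c : Continuous (fderiv ℝ E) := hE.continuous_fderiv one_ne_zero
  have hEc : Continuous E := hE.continuous
  simp only [htrunc] at hAmpere ⊢
  have hpot : HasDerivAt (fun s => ∫ x in (0:ℝ)..1, E (s, x) ^ 2)
      (∫ x in (0:ℝ)..1, 2 * E (t, x) * fderiv ℝ E (t, x) (1, 0)) t := by
    refine hasDerivAt_integral_of_continuous (fun s x => E (s, x) ^ 2)
      (fun s x => 2 * E (s, x) * fderiv ℝ E (s, x) (1, 0)) (fun s x => ?_) ?_ ?_ 0 1 t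
    · simpa using (hEd s x).fun_pow 2
    · simp only [Function.uncurry_def]; fun_prop
    · simp only [Function.uncurry_def]; fun_prop
  have hkin : HasDerivAt (fun s => ∫ x in (0:ℝ)..1, ∫ p in (-P)..P, g p * f (s, x, p))
      (∫ x in (0:ℝ)..1, ∫ p in (-P)..P, g p * fderiv ℝ f (t, x, p) (1, 0, 0)) t := by
    refine hasDerivAt_integral_of_continuous (fun s x => ∫ p in (-P)..P, g p * f (s, x, p))
      (fun s x => ∫ p in (-P)..P, g p * fderiv ℝ f (s, x, p) (1, 0, 0)) (fun s x => ?_) ?_ ?_ 0 1 t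
    · refine hasDerivAt_integral_of_continuous (fun s p => g p * f (s, x, p))
        (fun s p => g p * fderiv ℝ f (s, x, p) (1, 0, 0)) (fun s p => (hft s x p).const_mul _)
        ?_ ?_ _ _ s
      · simp only [Function.uncurry_def]; fun_prop
      · simp only [Function.uncurry_def]; fun_prop
    · exact intervalIntegral.continuous_parametric_intervalIntegral_of_continuous'
        (f := fun (z : ℝ × ℝ) p => g p * f (z.1, z.2, p)) (by fun_prop) _ _
    · exact intervalIntegral.continuous_parametric_intervalIntegral_of_continuous'
        (f := fun (z : ℝ × ℝ) p => g p * fderiv ℝ f (z.1, z.2, p) (1, 0, 0)) (by fun_prop) _ _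
  -- the energy flux `∫ g v f dp` is periodic in `x`, so its derivative has mean zero
  have hfluxc : Continuous fun x => ∫ p in (-P)..P, g p * v p * fderiv ℝ f (t, x, p) (0, 1, 0) :=
    intervalIntegral.continuous_parametric_intervalIntegral_of_continuous' (by fun_prop) _ _
  have hflux : ∫ x in (0:ℝ)..1, ∫ p in (-P)..P, g p * v p * fderiv ℝ f (t, x, p) (0, 1, 0) = 0 := by
    rw [intervalIntegral.integral_eq_sub_of_hasDerivAt
      (f := fun x => ∫ p in (-P)..P, g p * v p * f (t, x, p)) (fun x _ => ?_)
      (hfluxc.intervalIntegrable _ _)]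
    · have h01 : ∀ p, f (t, 1, p) = f (t, 0, p) := fun p => by simpa using hfper t 0 p
      simp [h01]
    · refine hasDerivAt_integral_of_continuous (fun y p => g p * v p * f (t, y, p))
        (fun y p => g p * v p * fderiv ℝ f (t, y, p) (0, 1, 0))
        (fun y p => (hfx t y p).const_mul _) ?_ ?_ _ _ x
      · simp only [Function.uncurry_def]; fun_prop
      · simp only [Function.uncurry_def]; fun_prop
  have hparts : ∀ x, ∫ p in (-P)..P, g p * fderiv ℝ f (t, x, p) (0, 0, 1)
      = -∫ p in (-P)..P, v p * f (t, x, p) := by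
    intro x
    rw [intervalIntegral.integral_mul_deriv_eq_deriv_mul (u := g) (u' := v)
      (v := fun p => f (t, x, p)) (fun p _ => hgd p) (fun p _ => hfp t x p)
      (hvc.intervalIntegrable _ _) (Continuous.intervalIntegrable (by fun_prop) _ _)]
    simp [hsupp t x P (le_abs_self P), hsupp t x (-P) (by simp [le_abs_self])]
  have hsplit : ∀ x, ∫ p in (-P)..P, g p * fderiv ℝ f (t, x, p) (1, 0, 0)
      = -(∫ p in (-P)..P, g p * v p * fderiv ℝ f (t, x, p) (0, 1, 0))
        - (E (t, x) + A (t, x) * B (t, x)) * ∫ p in (-P)..P, v p * f (t, x, p) := by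
    intro x
    rw [sub_eq_add_neg, ← mul_neg, ← hparts, ← intervalIntegral.integral_neg,
      ← intervalIntegral.integral_const_mul, ← intervalIntegral.integral_add
        (Continuous.intervalIntegrable (by fun_prop) _ _)
        (Continuous.intervalIntegrable (by fun_prop) _ _)]
    refine intervalIntegral.integral_congr fun p _ => ?_
    simp only [hPDE']
    ring
  have hpot' : ∀ x, 2 * E (t, x) * fderiv ℝ E (t, x) (1, 0)
      = (2 * η⁻¹ ^ 2) * (E (t, x) * ∫ p in (-P)..P, v p * f (t, x, p)) := by
    intro x
    rw [← (hEd t x).deriv, hAmpere]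
    ring
  refine (hkin.add (hpot.const_mul (η ^ 2 / 2))).congr_deriv ?_
  have hj := hjc t
  simp only [hsplit, hpot']
  rw [intervalIntegral.integral_sub (Continuous.intervalIntegrable (by fun_prop) _ _)
      (Continuous.intervalIntegrable (by fun_prop) _ _),
    intervalIntegral.integral_neg, hflux, intervalIntegral.integral_const_mul]
  simp only [add_mul]
  rw [intervalIntegral.integral_add (Continuous.intervalIntegrable (by fun_prop) _ _)
      (Continuous.intervalIntegrable (by fun_prop) _ _)]
  field_simp
  ring
end

section
/- Let h > 0, y₀ ∈ ℝ, and set equispaced nodes y_m = y₀ + m·h for m = 0, 1, …, 5. Let u₀, …, u₅ ∈ ℝ be arbitrary values. Let P be the unique polynomial of degree ≤ 5 with P(y_m) = u_m for m = 0, …, 5, and let Q₀, Q₁, Q₂ be the unique polynomials of degree ≤ 3 interpolating the same values on the substencils {y₂, y₃, y₄, y₅}, {y₁, y₂, y₃, y₄} and {y₀, y₁, y₂, y₃} respectively. Then for all x ∈ ℝ: P(x) = [(x − y₀)(x − y₁)/(20h²)]·Q₀(x) − [(x − y₀)(x − y₅)/(10h²)]·Q₁(x) + [(x − y₅)(x −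 y₄)/(20h²)]·Q₂(x). -/
/-!
The three weights sum to `1` identically, and each weight vanishes at the nodes of the big
stencil which do not belong to the corresponding substencil. Hence the combination takes the
value `u m` at each of the six nodes. Its degree is at most `2 + 3 = 5`, so it coincides
with `P` by uniqueness of Lagrange interpolation on six distinct nodes.
-/

open Polynomial

/-- Multiplying a polynomial of degree at most `3` by a quadratic weight given by its two roots
and a leading coefficient yields degree at most `5`. -/
lemma degree_weight_mul_le (c a b : ℝ) (Q : Polynomial ℝ) (hQ : Q.degree ≤ 3) :
    (C c * ((X - C a) * (X - C b)) * Q).degree ≤ 5 := by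
  have hw : (C c * ((X - C a) * (X - C b)) : Polynomial ℝ).degree ≤ 2 := by
    compute_degree
  exact (degree_mul_le_of_le hw hQ).trans (by norm_num)

/-- FBMWENO with `(r_tot, r_sub) = (5, 3)`: the degree-5 interpolant on the big
stencil of 6 equispaced nodes is the combination of the three degree-3
interpolants on the four-point substencils with the polynomial coefficients
`C₀, C₁, C₂`. -/
theorem fbmweno_optimal_polynomial_weights
    (h : ℝ) (hh : 0 < h) (y₀ : ℝ)
    (y : ℕ → ℝ) (hy : ∀ m : ℕ, y m = y₀ + (m : ℝ) * h)
    (u : ℕ → ℝ)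
    (P : Polynomial ℝ) (hPdeg : P.degree ≤ 5)
    (hP : ∀ m : ℕ, m ≤ 5 → P.eval (y m) = u m)
    (Q₀ Q₁ Q₂ : Polynomial ℝ)
    (hQ₀deg : Q₀.degree ≤ 3) (hQ₁deg : Q₁.degree ≤ 3) (hQ₂deg : Q₂.degree ≤ 3)
    (hQ₀ : ∀ m : ℕ, 2 ≤ m → m ≤ 5 → Q₀.eval (y m) = u m)
    (hQ₁ : ∀ m : ℕ, 1 ≤ m → m ≤ 4 → Q₁.eval (y m) = u m)
    (hQ₂ : ∀ m : ℕ, m ≤ 3 → Q₂.eval (y m) = u m) :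
    ∀ x : ℝ,
      P.eval x =
        ((x - y 0) * (x - y 1) / (20 * h ^ 2)) * Q₀.eval x
          - ((x - y 0) * (x - y 5) / (10 * h ^ 2)) * Q₁.eval x
          + ((x - y 5) * (x - y 4) / (20 * h ^ 2)) * Q₂.eval x := by
  have hne : h ≠ 0 := hh.ne'
  have hPR : P =
      C (1 / (20 * h ^ 2)) * ((X - C (y 0)) * (X - C (y 1))) * Q₀
        - C (1 / (10 * h ^ 2)) * ((X - C (y 0)) * (X - C (y 5))) * Q₁
        + C (1 / (20 * h ^ 2)) * ((X - C (y 5)) * (X - C (y 4))) * Q₂ := by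
    have hinj : Set.InjOn y (Finset.range 6 : Finset ℕ) := by
      intro a _ b _ hab
      rw [hy, hy] at hab
      exact_mod_cast mul_right_cancel₀ hne (add_left_cancel hab)
    refine eq_of_degrees_lt_of_eval_index_eq (Finset.range 6) hinj ?_ ?_ ?_
    · exact hPdeg.trans_lt (by norm_num)
    · refine lt_of_le_of_lt (b := 5) ?_ (by norm_num)
      exact (degree_add_le _ _).trans (max_le ((degree_sub_le _ _).trans (max_le
        (degree_weight_mul_le _ _ _ _ hQ₀deg) (degree_weight_mul_le _ _ _ _ hQ₁deg)))
        (degree_weight_mul_le _ _ _ _ hQ₂deg))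
    · intro m hm
      have hm5 : m ≤ 5 := by
        have := Finset.mem_range.mp hm
        omega
      simp only [eval_add, eval_sub, eval_mul, eval_C, eval_X]
      rw [hP m hm5]
      -- At a node outside a substencil the factor `y m - y j` vanishes, so the unknown value of
      -- that substencil's interpolant drops out.
      interval_cases m
      · rw [hQ₂ 0 (by norm_num)]
        simp only [hy]; push_cast; field_simp; ring
      · rw [hQ₁ 1 (by norm_num) (by norm_num), hQ₂ 1 (by norm_num)]
        simp only [hy]; push_cast; field_simp; ring
      · rw [hQ₀ 2 (by norm_num) (by norm_num), hQ₁ 2 (by norm_num) (by norm_num),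
          hQ₂ 2 (by norm_num)]
        simp only [hy]; push_cast; field_simp; ring
      · rw [hQ₀ 3 (by norm_num) (by norm_num), hQ₁ 3 (by norm_num) (by norm_num),
          hQ₂ 3 (by norm_num)]
        simp only [hy]; push_cast; field_simp; ring
      · rw [hQ₀ 4 (by norm_num) (by norm_num), hQ₁ 4 (by norm_num) (by norm_num)]
        simp only [hy]; push_cast; field_simp; ring
      · rw [hQ₀ 5 (by norm_num) (by norm_num)]
        simp only [hy]; push_cast; field_simp; ring
  intro x
  rw [hPR]
  simp only [eval_add, eval_sub, eval_mul, eval_C, eval_X]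
  ring
end

section
/- Let h > 0, y₀ ∈ ℝ, and set y_m = y₀ + m·h for m = 0, 1, …, 5. Define C₀(x) = (x − y₀)(x − y₁)/(20h²), C₁(x) = −(x − y₀)(x − y₅)/(10h²) and C₂(x) = (x − y₅)(x − y₄)/(20h²). Then: (i) C₀(x) + C₁(x) + C₂(x) = 1 for all x ∈ ℝ; and (ii) for every x with y₂ < x < y₃, each of C₀(x), C₁(x), C₂(x) is strictly positive. -/
/-- The FBMWENO optimal-weight polynomials `C₀, C₁, C₂` form a partition of
unity, and they are strictly positive on the central cell `(y₂, y₃)`. -/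
theorem fbmweno_weights_partition_of_unity_and_positivity
    (h : ℝ) (hh : 0 < h) (y₀ : ℝ)
    (y : ℕ → ℝ) (hy : ∀ m : ℕ, y m = y₀ + (m : ℝ) * h)
    (C₀ C₁ C₂ : ℝ → ℝ)
    (hC₀ : ∀ x : ℝ, C₀ x = (x - y 0) * (x - y 1) / (20 * h ^ 2))
    (hC₁ : ∀ x : ℝ, C₁ x = -((x - y 0) * (x - y 5)) / (10 * h ^ 2))
    (hC₂ : ∀ x : ℝ, C₂ x = (x - y 5) * (x - y 4) / (20 * h ^ 2)) :
    (∀ x : ℝ, C₀ x + C₁ x + C₂ x = 1) ∧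
    (∀ x : ℝ, y 2 < x → x < y 3 → 0 < C₀ x ∧ 0 < C₁ x ∧ 0 < C₂ x) := by
  have e0 : y 0 = y₀ := by simp [hy]
  have e1 : y 1 = y₀ + h := by simp [hy]
  have e2 : y 2 = y₀ + 2 * h := by simp [hy]
  have e3 : y 3 = y₀ + 3 * h := by simp [hy]
  have e4 : y 4 = y₀ + 4 * h := by simp [hy]
  have e5 : y 5 = y₀ + 5 * h := by simp [hy]
  refine ⟨fun x => ?_, fun x hx2 hx3 => ?_⟩
  · -- With `t = (x - y₀) / h` this is `t (t - 1) - 2 t (t - 5) + (t - 5) (t - 4) = 20`.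
    rw [hC₀, hC₁, hC₂, e0, e1, e4, e5]
    field_simp
    ring
  · rw [hC₀, hC₁, hC₂]
    -- The cell `(y₂, y₃)` lies to the right of `y₀, y₁` and to the left of `y₄, y₅`.
    have p0 : 0 < x - y 0 := by linarith
    have p1 : 0 < x - y 1 := by linarith
    have n4 : x - y 4 < 0 := by linarith
    have n5 : x - y 5 < 0 := by linarith
    exact ⟨div_pos (mul_pos p0 p1) (by positivity),
      div_pos (neg_pos.mpr (mul_neg_of_pos_of_neg p0 n5)) (by positivity),
      div_pos (mul_pos_of_neg_of_neg n5 n4) (by positivity)⟩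
end

section
/- Let V be a real vector space and N a seminorm on V. Let H : ℝ × V → V, let Δt > 0 and t₀ ∈ ℝ, and assume the forward-Euler contraction property N(u + Δt·H(t, u)) ≤ N(u) for every t ∈ ℝ and u ∈ V. Define the third-order TVD Runge–Kutta stages f¹ := f⁰ + Δt·H(t₀, f⁰), f² := (3/4)·f⁰ + (1/4)·f¹ + (1/4)·Δt·H(t₀ + Δt, f¹), and f³ := (1/3)·f⁰ + (2/3)·f² + (2/3)·Δt·H(t₀ + Δt/2, f²). Then N(f³) ≤ N(f⁰). -/
/-- A Runge–Kutta stage of the form `a • u + b • v + (b * Δt) • w` is the combination of `u` and the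
forward-Euler step `v + Δt • w` with weights `a` and `b`, so it inherits a common seminorm bound. -/
theorem seminorm_stage_le {V : Type*} [AddCommGroup V] [Module ℝ V] (N : Seminorm ℝ V)
    {a b Δt C : ℝ} (ha : 0 ≤ a) (hb : 0 ≤ b) (hab : a + b = 1) {u v w : V}
    (hu : N u ≤ C) (hv : N (v + Δt • w) ≤ C) :
    N (a • u + b • v + (b * Δt) • w) ≤ C := by
  have h : a • u + b • v + (b * Δt) • w = a • u + b • (v + Δt • w) := by
    rw [smul_add, smul_smul, add_assoc]
  calc N (a • u + b • v + (b * Δt) • w)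
      ≤ N (a • u) + N (b • (v + Δt • w)) := h ▸ map_add_le_add N _ _
    _ = a * N u + b * N (v + Δt • w) := by
      rw [map_smul_eq_mul, map_smul_eq_mul, Real.norm_of_nonneg ha, Real.norm_of_nonneg hb]
    _ ≤ a * C + b * C := by gcongr
    _ = C := by rw [← add_mul, hab, one_mul]

/-- The third-order TVD Runge–Kutta scheme does not increase any seminorm that
is not increased by a single forward-Euler step. -/
theorem tvd_rk3_seminorm_nonincreasing
    (V : Type*) [AddCommGroup V] [Module ℝ V] (N : Seminorm ℝ V)
    (H : ℝ → V → V) (Δt : ℝ) (hΔt : 0 < Δt) (t₀ : ℝ)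
    (hFE : ∀ (t : ℝ) (u : V), N (u + Δt • H t u) ≤ N u)
    (f0 f1 f2 f3 : V)
    (hf1 : f1 = f0 + Δt • H t₀ f0)
    (hf2 : f2 = (3/4 : ℝ) • f0 + (1/4 : ℝ) • f1
        + ((1/4 : ℝ) * Δt) • H (t₀ + Δt) f1)
    (hf3 : f3 = (1/3 : ℝ) • f0 + (2/3 : ℝ) • f2
        + ((2/3 : ℝ) * Δt) • H (t₀ + Δt / 2) f2) :
    N f3 ≤ N f0 := by
  have h1 : N f1 ≤ N f0 := hf1 ▸ hFE t₀ f0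
  have h2 : N f2 ≤ N f0 := by
    rw [hf2]
    exact seminorm_stage_le N (by norm_num) (by norm_num) (by norm_num) le_rfl
      ((hFE _ f1).trans h1)
  rw [hf3]
  exact seminorm_stage_le N (by norm_num) (by norm_num) (by norm_num) le_rfl
    ((hFE _ f2).trans h2)
end
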